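/- Let σ = (r_1,...,r_k) be a composition of a positive integer n and let rev(σ) = (r_k,...,r_1) be its reversal. For every m ∈ ℕ, the number of points (a_1,...,a_n) ∈ ℕ^n satisfying a_1 + a_2 + ... + a_{s_i} ≤ m·s_i for all i ∈ {1,...,k} is equal to the number of multichains p_1 ≼ p_2 ≼ ... ≼ p_m of length m in the poset P_{rev(σ)} (equivalently, Ehr(Q_σ, m) = Z(P_{rev(σ)}, m+1)). -/

import Mathlib

open Finset Polynomial

/-- `pSum σ i = r₁ + ⋯ + rᵢ`, the `i`-th partial sum of the composition `σ`. -/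
def pSum (σ : List ℕ) (i : ℕ) : ℕ := (σ.take i).sum

/-- Membership in the set `P_σ ⊆ ℕⁿ`: the partial sum of the first `s_i`
coordinates is at most `s_i` for every `i ∈ [k]`. -/
def memP (n : ℕ) (σ : List ℕ) (a : Fin n → ℕ) : Prop :=
  ∀ i, 1 ≤ i → i ≤ σ.length →
    (∑ j ∈ Finset.univ.filter (fun j : Fin n => (j : ℕ) < pSum σ i), a j) ≤ pSum σ i

/-- The number of nonzero coordinates of a tuple. -/
def nonzeroCount {n : ℕ} (a : Fin n → ℕ) : ℕ :=
  (Finset.univ.filter (fun j => a j ≠ 0)).card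

/-- `h_i(σ)`: the number of points of `P_σ` with exactly `i` nonzero coordinates. -/
noncomputable def hVec (n : ℕ) (σ : List ℕ) (i : ℕ) : ℕ :=
  {a : Fin n → ℕ | memP n σ a ∧ nonzeroCount a = i}.ncard

/-- The number of lattice points of the `m`-th dilate of the composition
polytope `Q_σ`, i.e. the Ehrhart polynomial of `Q_σ` evaluated at `m`. -/
noncomputable def ehrCount (n : ℕ) (σ : List ℕ) (m : ℕ) : ℕ :=
  {a : Fin n → ℕ | ∀ i, 1 ≤ i → i ≤ σ.length →
    (∑ j ∈ Finset.univ.filter (fun j : Fin n => (j : ℕ) < pSum σ i), a j)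
      ≤ m * pSum σ i}.ncard

/-- The number of `m`-multichains in the poset `P_σ` (coordinatewise order). -/
noncomputable def multichainCount (n : ℕ) (σ : List ℕ) (m : ℕ) : ℕ :=
  {p : Fin m → Fin n → ℕ |
    (∀ t, memP n σ (p t)) ∧
    ∀ t t' : Fin m, t ≤ t' → ∀ j, p t j ≤ p t' j}.ncard

/-!
A point `a ∈ ℕⁿ` with `∑ aⱼ ≤ N` is a lattice path from `(0, 0)` to `(n, N)`. Reversing and
reflecting the path gives a point `b ∈ ℕᴺ` with `∑ b_w ≤ n`, and the path of `a` stays below a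
corner `(x, y)` exactly when the path of `b` stays below `(N - y, n - x)`. With `N = n * m` this
turns the inequalities of the `m`-th dilate of `Q_σ` into those asserting that the sum of the first
`s * m` coordinates of `b` is at most `s`, for each partial sum `s` of `rev(σ)`. On the other
side, a multichain of length `m` in `ℕⁿ` is determined by its `n * m` increments. It lies in
`P_τ` as soon as its top element does, and for `τ = rev(σ)` this is the same system of inequalities
on the increments.
-/

section PrefixSum

variable {M : Type*} {n : ℕ}

/-- The sum of the first `x` coordinates of `a`. The bound `x` ranges over all of `ℕ`, with every
coordinate included once `n ≤ x`. -/
def prefixSum [AddCommMonoid M] (a : Fin n → M) (x : ℕ) : M :=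
  ∑ j ∈ univ.filter (fun j : Fin n ↦ (j : ℕ) < x), a j

@[simp]
lemma prefixSum_zero [AddCommMonoid M] (a : Fin n → M) : prefixSum a 0 = 0 := by
  simp [prefixSum]

lemma prefixSum_succ [AddCommMonoid M] (a : Fin n → M) (j : Fin n) :
    prefixSum a (j + 1) = prefixSum a j + a j := by
  have hinsert : ({i : Fin n | (i : ℕ) < j + 1} : Finset (Fin n)) =
      insert j ({i : Fin n | (i : ℕ) < j} : Finset (Fin n)) := by
    ext i
    simp only [Finset.mem_filter_univ, Finset.mem_insert, Fin.ext_iff]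
    omega
  rw [prefixSum, hinsert, Finset.sum_insert (by simp), add_comm, prefixSum]

lemma prefixSum_mono [AddCommMonoid M] [PartialOrder M] [CanonicallyOrderedAdd M]
    (a : Fin n → M) : Monotone (prefixSum a) := fun _ _ hxy ↦
  Finset.sum_le_sum_of_subset <| Finset.monotone_filter_right _ fun _ _ hj ↦ hj.trans_le hxy

lemma prefixSum_le_prefixSum [AddCommMonoid M] [PartialOrder M] [IsOrderedAddMonoid M]
    {a b : Fin n → M} (hab : a ≤ b) (x : ℕ) : prefixSum a x ≤ prefixSum b x :=
  Finset.sum_le_sum fun j _ ↦ hab j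

lemma eq_of_prefixSum_succ_eq [AddCommMonoid M] [IsLeftCancelAdd M] {a b : Fin n → M}
    (h : ∀ j : Fin n, prefixSum a (j + 1) = prefixSum b (j + 1)) : a = b := by
  funext ⟨j, hj⟩
  have hprev : prefixSum a j = prefixSum b j := by
    cases j with
    | zero => simp only [prefixSum_zero]
    | succ i => exact h ⟨i, by omega⟩
  have hnext := h ⟨j, hj⟩
  rw [prefixSum_succ, prefixSum_succ, hprev] at hnext
  exact add_left_cancel hnext

lemma prefixSum_mul_right [AddCommMonoid M] {m : ℕ} (d : Fin (n * m) → M) (s : ℕ) :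
    prefixSum d (s * m) =
      prefixSum (fun j : Fin n ↦ prefixSum (fun t ↦ d (finProdFinEquiv (j, t))) m) s := by
  have hlt (j : Fin n) (t : Fin m) : (finProdFinEquiv (j, t) : ℕ) < s * m ↔ (j : ℕ) < s := by
    rw [← Nat.div_lt_iff_lt_mul t.pos]
    simp [Nat.add_mul_div_left _ _ t.pos, Nat.div_eq_of_lt t.isLt]
  simp only [prefixSum, Finset.sum_filter, ← finProdFinEquiv.sum_comp, Fintype.sum_prod_type,
    hlt, Fin.is_lt, if_true]
  exact Finset.sum_congr rfl fun j _ ↦ by split_ifs <;> simp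

lemma exists_prefixSum_succ_eq {p : Fin n → ℕ} (hp : Monotone p) :
    ∃ d : Fin n → ℕ, ∀ t : Fin n, prefixSum d (t + 1) = p t := by
  -- `prev` extends the sequence by `0` on the left: `prev 0 = 0` and `prev (t + 1) = p t`.
  let prev (x : ℕ) : ℕ := ({i : Fin n | i < x} : Finset (Fin n)).sup p
  have hprev_succ (t : Fin n) : prev (t + 1) = p t :=
    le_antisymm
      (Finset.sup_le fun i hi ↦ hp (Nat.lt_succ_iff.mp (Finset.mem_filter_univ i |>.mp hi)))
      (Finset.le_sup (by simp))
  have hprev_le (t : Fin n) : prev t ≤ p t :=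
    Finset.sup_le fun i hi ↦ hp (Finset.mem_filter_univ i |>.mp hi).le
  have hsum (x : ℕ) (hx : x ≤ n) : prefixSum (fun t ↦ p t - prev t) x = prev x := by
    induction x with
    | zero => simp [prev]
    | succ x ih =>
      let t : Fin n := ⟨x, hx⟩
      rw [prefixSum_succ _ t, ih (by omega), hprev_succ t]
      exact Nat.add_sub_cancel' (hprev_le t)
  exact ⟨fun t ↦ p t - prev t, fun t ↦ (hsum _ t.isLt).trans (hprev_succ t)⟩

end PrefixSum

section Conjugate

variable {n N : ℕ}

/-- The conjugate of the lattice path from `(0, 0)` to `(n, N)` whose height above `x` is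
`prefixSum a x`: the path from `(0, 0)` to `(N, n)` obtained by reflecting it in a diagonal and
traversing it backwards. Its `w`-th increment counts the steps of the original path that end at
height `N - w`; the equation is stated additively to avoid truncated subtraction. -/
def conjugate (N : ℕ) (a : Fin n → ℕ) (w : Fin N) : ℕ :=
  #{j : Fin n | prefixSum a (j + 1) + w = N}

lemma lt_card_filter_succ_add_iff {p : ℕ → Prop} [DecidablePred p] (hp : Monotone p)
    (hp0 : ¬ p 0) {i : ℕ} (hi : i ≤ n) : n < #{j : Fin n | p (j + 1)} + i ↔ p i := by
  have hcompl := Finset.card_filter_add_card_filter_not (s := (univ : Finset (Fin n)))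
    fun j ↦ p (j + 1)
  rw [Finset.card_fin] at hcompl
  constructor
  · intro hlt
    by_contra hpi
    have hsub : ({j : Fin n | j < i} : Finset (Fin n)) ⊆
        ({j : Fin n | ¬ p (j + 1)} : Finset (Fin n)) :=
      Finset.monotone_filter_right _ fun j _ hj hpj ↦ hpi (hp hj hpj)
    have hcard := Finset.card_le_card hsub
    rw [Fin.card_filter_val_lt] at hcard
    omega
  · intro hpi
    have hi0 : i ≠ 0 := by
      rintro rfl
      exact hp0 hpi
    have hsub : ({j : Fin n | ¬ p (j + 1)} : Finset (Fin n)) ⊆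
        ({j : Fin n | j < i - 1} : Finset (Fin n)) :=
      Finset.monotone_filter_right _ fun j _ hj ↦ by
        by_contra hij
        exact hj (hp (by omega) hpi)
    have hcard := Finset.card_le_card hsub
    rw [Fin.card_filter_val_lt] at hcard
    omega

lemma prefixSum_conjugate {a : Fin n → ℕ} (ha : prefixSum a n ≤ N) {x : ℕ} (hx : x ≤ N) :
    prefixSum (conjugate N a) x = #{j : Fin n | N < prefixSum a (j + 1) + x} := by
  induction x with
  | zero =>
    have hle (j : Fin n) : prefixSum a (j + 1) ≤ N := (prefixSum_mono a j.isLt).trans ha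
    simp only [prefixSum_zero, add_zero, (hle _).not_gt, Finset.filter_false, Finset.card_empty]
  | succ x ih =>
    rw [prefixSum_succ _ ⟨x, hx⟩, ih (by omega), conjugate, ← Finset.card_union_of_disjoint
      (Finset.disjoint_filter.mpr fun _ _ hlt heq ↦ hlt.ne' heq), ← Finset.filter_or]
    congr! 2 with j
    dsimp only
    omega

lemma prefixSum_conjugate_le {a : Fin n → ℕ} (ha : prefixSum a n ≤ N) :
    prefixSum (conjugate N a) N ≤ n := by
  rw [prefixSum_conjugate ha le_rfl]
  exact (Finset.card_filter_le _ _).trans_eq (Finset.card_fin n)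

lemma lt_prefixSum_conjugate_add_iff {a : Fin n → ℕ} (ha : prefixSum a n ≤ N) {i x : ℕ}
    (hi : i ≤ n) (hx : x ≤ N) :
    n < prefixSum (conjugate N a) x + i ↔ N < prefixSum a i + x := by
  rw [prefixSum_conjugate ha hx]
  refine lt_card_filter_succ_add_iff (p := fun i ↦ N < prefixSum a i + x) ?_ ?_ hi
  · exact fun i j hij hlt ↦ hlt.trans_le (Nat.add_le_add_right (prefixSum_mono a hij) x)
  · simpa using hx

lemma prefixSum_conjugate_sub_le_iff {a : Fin n → ℕ} (ha : prefixSum a n ≤ N) {x y : ℕ}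
    (hx : x ≤ n) (hy : y ≤ N) :
    prefixSum (conjugate N a) (N - y) ≤ n - x ↔ prefixSum a x ≤ y := by
  have := lt_prefixSum_conjugate_add_iff ha hx (Nat.sub_le N y)
  omega

lemma conjugate_conjugate {a : Fin n → ℕ} (ha : prefixSum a n ≤ N) :
    conjugate n (conjugate N a) = a := by
  have hb := prefixSum_conjugate_le ha
  refine eq_of_prefixSum_succ_eq fun j ↦ eq_of_forall_ge_iff fun y ↦ ?_
  have hj : (j + 1 : ℕ) ≤ n := j.isLt
  rcases le_total N y with hy | hy
  · exact iff_of_true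
      (((prefixSum_mono _ hj).trans (prefixSum_conjugate_le hb)).trans hy)
      (((prefixSum_mono a hj).trans ha).trans hy)
  · have hconj := prefixSum_conjugate_sub_le_iff hb (Nat.sub_le N y) (Nat.sub_le n (j + 1))
    rw [Nat.sub_sub_self hy, Nat.sub_sub_self hj] at hconj
    exact hconj.trans (prefixSum_conjugate_sub_le_iff ha hj hy)

lemma ncard_prefixSum_le_eq_conjugate {S : Set ℕ} {y : ℕ → ℕ} (hS : ∀ s ∈ S, s ≤ n)
    (hy : ∀ s ∈ S, y s ≤ N) (h_zero : 0 ∈ S) (hy_zero : y 0 = 0) (h_last : n ∈ S)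
    (hy_last : y n = N) :
    {a : Fin n → ℕ | ∀ s ∈ S, prefixSum a s ≤ y s}.ncard =
      {b : Fin N → ℕ | ∀ s ∈ S, prefixSum b (N - y s) ≤ n - s}.ncard := by
  have ha_le {a : Fin n → ℕ} (ha : ∀ s ∈ S, prefixSum a s ≤ y s) : prefixSum a n ≤ N :=
    hy_last ▸ ha n h_last
  have hb_le {b : Fin N → ℕ} (hb : ∀ s ∈ S, prefixSum b (N - y s) ≤ n - s) :
      prefixSum b N ≤ n := by
    simpa only [hy_zero, Nat.sub_zero] using hb 0 h_zero
  refine (Set.InvOn.bijOn (f := conjugate N) (f' := conjugate n)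
    ⟨fun a ha ↦ conjugate_conjugate (ha_le ha), fun b hb ↦ conjugate_conjugate (hb_le hb)⟩
    (fun a ha s hs ↦ ?_) (fun b hb s hs ↦ ?_)).ncard_eq
  · exact (prefixSum_conjugate_sub_le_iff (ha_le ha) (hS s hs) (hy s hs)).mpr (ha s hs)
  · have hiff := prefixSum_conjugate_sub_le_iff (prefixSum_conjugate_le (hb_le hb)) (hS s hs)
      (hy s hs)
    rw [conjugate_conjugate (hb_le hb)] at hiff
    exact hiff.mp (hb s hs)

end Conjugate

section PartialSums

/-- The set `{s_0, s_1, …, s_k}` of partial sums of `σ`, including the empty one `s_0 = 0`. -/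
def partialSums (σ : List ℕ) : Set ℕ := pSum σ '' Set.Iic σ.length

variable {σ : List ℕ}

lemma zero_mem_partialSums : 0 ∈ partialSums σ := ⟨0, Nat.zero_le _, rfl⟩

lemma sum_mem_partialSums : σ.sum ∈ partialSums σ := ⟨σ.length, Set.self_mem_Iic, by simp [pSum]⟩

lemma le_sum_of_mem_partialSums {s : ℕ} (hs : s ∈ partialSums σ) : s ≤ σ.sum := by
  obtain ⟨i, -, rfl⟩ := hs
  exact (List.take_sublist i σ).sum_le_sum fun _ _ ↦ Nat.zero_le _

lemma pSum_reverse (σ : List ℕ) (i : ℕ) :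
    pSum σ.reverse i = σ.sum - pSum σ (σ.length - i) := by
  rw [pSum, pSum, List.take_reverse, List.sum_reverse,
    ← List.sum_take_add_sum_drop σ (σ.length - i), Nat.add_sub_cancel_left]

lemma partialSums_reverse (σ : List ℕ) :
    partialSums σ.reverse = (σ.sum - ·) '' partialSums σ := by
  have hreflect : (σ.length - ·) '' Set.Iic σ.length = Set.Iic σ.length := by
    refine Set.Subset.antisymm (Set.image_subset_iff.mpr fun i _ ↦ Nat.sub_le _ i) fun i hi ↦ ?_
    exact ⟨σ.length - i, Nat.sub_le _ i, Nat.sub_sub_self hi⟩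
  calc partialSums σ.reverse
      = (fun i ↦ σ.sum - pSum σ (σ.length - i)) '' Set.Iic σ.length := by
        simp only [partialSums, List.length_reverse, pSum_reverse]
    _ = (fun i ↦ σ.sum - pSum σ i) '' ((σ.length - ·) '' Set.Iic σ.length) := by
        rw [Set.image_image]
    _ = (σ.sum - ·) '' partialSums σ := by
        rw [hreflect, partialSums, Set.image_image]

lemma forall_partialSums_iff {P : ℕ → Prop} (hP : P 0) :
    (∀ s ∈ partialSums σ, P s) ↔ ∀ i, 1 ≤ i → i ≤ σ.length → P (pSum σ i) := by
  simp only [partialSums, Set.forall_mem_image, Set.mem_Iic]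
  refine ⟨fun h i _ hi ↦ h hi, fun h i hi ↦ ?_⟩
  cases i with
  | zero => exact hP
  | succ i => exact h _ i.succ_pos hi

lemma memP_iff_forall_partialSums {n : ℕ} {a : Fin n → ℕ} :
    memP n σ a ↔ ∀ s ∈ partialSums σ, prefixSum a s ≤ s :=
  (forall_partialSums_iff (σ := σ) (P := fun s ↦ prefixSum a s ≤ s) (by simp)).symm

lemma ehrCount_eq_ncard (n : ℕ) (σ : List ℕ) (m : ℕ) :
    ehrCount n σ m =
      {a : Fin n → ℕ | ∀ s ∈ partialSums σ, prefixSum a s ≤ m * s}.ncard := by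
  rw [ehrCount]
  congr! 3 with a
  exact (forall_partialSums_iff (σ := σ) (P := fun s ↦ prefixSum a s ≤ m * s) (by simp)).symm

end PartialSums

section Multichain

variable {n m : ℕ}

/-- The multichain of length `m` in `ℕⁿ` with increments `d`: flattening `Fin n × Fin m` in
lexicographic order, the `(j, u)` entry of `d` is the increase of the `j`-th coordinate at the
`u`-th step, where the first step starts from `0`. -/
def multichainOfIncrements (d : Fin (n * m) → ℕ) (t : Fin m) (j : Fin n) : ℕ :=
  prefixSum (fun u ↦ d (finProdFinEquiv (j, u))) (t + 1)

lemma multichainOfIncrements_injective :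
    Function.Injective (multichainOfIncrements (n := n) (m := m)) := by
  intro d e hde
  refine finProdFinEquiv.surjective.injective_comp_right (funext fun ⟨j, u⟩ ↦ ?_)
  exact congrFun (eq_of_prefixSum_succ_eq fun t ↦ congrFun (congrFun hde t) j) u

lemma monotone_multichainOfIncrements (d : Fin (n * m) → ℕ) :
    Monotone (multichainOfIncrements d) := fun _ _ htt' _ ↦
  prefixSum_mono _ (Nat.succ_le_succ htt')

lemma exists_multichainOfIncrements_eq {p : Fin m → Fin n → ℕ} (hp : Monotone p) :
    ∃ d, multichainOfIncrements d = p := by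
  choose d hd using fun j ↦ exists_prefixSum_succ_eq fun _ _ htt' ↦ hp htt' j
  refine ⟨fun x ↦ d (finProdFinEquiv.symm x).1 (finProdFinEquiv.symm x).2, ?_⟩
  funext t j
  simpa only [multichainOfIncrements, Equiv.symm_apply_apply] using hd j t

lemma forall_prefixSum_multichainOfIncrements_le_iff {d : Fin (n * m) → ℕ} {s c : ℕ} :
    (∀ t, prefixSum (multichainOfIncrements d t) s ≤ c) ↔ prefixSum d (s * m) ≤ c := by
  rw [prefixSum_mul_right]
  constructor
  · intro h
    cases m with
    | zero => simp [prefixSum]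
    | succ m => exact h (Fin.last m)
  · exact fun h t ↦ (prefixSum_le_prefixSum (fun j ↦ prefixSum_mono _ t.isLt) s).trans h

lemma multichainCount_eq_ncard (n : ℕ) (τ : List ℕ) (m : ℕ) :
    multichainCount n τ m =
      {d : Fin (n * m) → ℕ | ∀ s ∈ partialSums τ, prefixSum d (s * m) ≤ s}.ncard := by
  rw [← Set.ncard_image_of_injective _ multichainOfIncrements_injective, multichainCount]
  have hmem (d : Fin (n * m) → ℕ) : (∀ t, memP n τ (multichainOfIncrements d t)) ↔
      ∀ s ∈ partialSums τ, prefixSum d (s * m) ≤ s := by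
    simp only [memP_iff_forall_partialSums, ← forall_prefixSum_multichainOfIncrements_le_iff]
    exact ⟨fun h s hs t ↦ h t s hs, fun h t s hs ↦ h s hs t⟩
  congr 1
  ext p
  constructor
  · rintro ⟨hpP, hp⟩
    obtain ⟨d, rfl⟩ := exists_multichainOfIncrements_eq hp
    exact ⟨d, (hmem d).mp hpP, rfl⟩
  · rintro ⟨d, hd, rfl⟩
    exact ⟨(hmem d).mpr hd, monotone_multichainOfIncrements d⟩

end Multichain

/-- `Ehr(Q_σ, m) = Z(P_{rev(σ)}, m + 1)` for every composition `σ` and `m ∈ ℕ`. -/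
theorem ehrhart_eq_zeta (n : ℕ) (hn : 0 < n) (σ : List ℕ)
    (hpos : ∀ r ∈ σ, 0 < r) (hsum : σ.sum = n) :
    ∀ m : ℕ, ehrCount n σ m = multichainCount n σ.reverse m := by
  intro m
  subst hsum
  calc ehrCount σ.sum σ m
      = {a : Fin σ.sum → ℕ | ∀ s ∈ partialSums σ, prefixSum a s ≤ m * s}.ncard :=
        ehrCount_eq_ncard σ.sum σ m
    _ = {b : Fin (σ.sum * m) → ℕ |
          ∀ s ∈ partialSums σ, prefixSum b (σ.sum * m - m * s) ≤ σ.sum - s}.ncard :=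
        ncard_prefixSum_le_eq_conjugate (fun _ ↦ le_sum_of_mem_partialSums)
          (fun s hs ↦ mul_comm m s ▸ Nat.mul_le_mul_right m (le_sum_of_mem_partialSums hs))
          zero_mem_partialSums (mul_zero m) sum_mem_partialSums (mul_comm m _)
    _ = {b : Fin (σ.sum * m) → ℕ |
          ∀ s ∈ partialSums σ.reverse, prefixSum b (s * m) ≤ s}.ncard := by
        simp only [partialSums_reverse, Set.forall_mem_image, Nat.sub_mul, mul_comm m]
    _ = multichainCount σ.sum σ.reverse m := (multichainCount_eq_ncard _ _ m).symm
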